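/- Let a < b be real numbers, q a positive natural number, l ≥ 1, let a_i : Fin l → ℕ be pairwise distinct natural numbers and c : Fin l → ℂ coefficients such that the coefficient c_{i₀} attached to the largest exponent a_{i₀} is nonzero. Then there exist m ∈ ℕ, coefficients d : Fin m → ℂ, natural numbers b_k : Fin m → ℕ, a natural number n, and coefficients e : Fin (n+1) → ℂ with e_n ≠ 0, such that for every x : ℝ → ℂ integrable on (a,b) and almost every t ∈ (a,b): Σ_{k} d_k · ( I_{a+}^{b_k/q} ( s ↦ Σ_{i} c_i · (I_{a+}^{a_i/q} x)(s) ) )(t) = Σ_{j=0}^{n} e_j · (I_{a+}^{j} x)(t). In words: every linear fractional integral operator with constant coefficients and rational orders can be composed with another such operator so that the composition is a linear integral operator with constant coefficients and natural-number orders, whose top-order coefficient is nonzero. -/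

import Mathlib

/-!
Write the given operator as `P(I^(1/q))` with the polynomial `P = ∑ c_i X^(a_i)`, which is nonzero
because its top coefficient is. Over `ℂ`, `P` is a product of linear factors, and `X - r` divides
`X^q - r^q`; hence some multiple `Q * P` equals `R(X^q)` with `R ≠ 0` (`exists_mul_eq_expand`).
Composing with `Q(I^(1/q))` gives `R(I^1)`, an operator of natural orders whose top coefficient is
the leading coefficient of `R`.

Passing from polynomials to operators needs linearity (`rlInt_sum`) and the semigroup law
`I^α I^β = I^(α+β)` (`rlInt_rlInt`), both almost everywhere on `(a, b)`. For these, `I^α x` is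
multiplied by `exp (-t)`, which turns it into the convolution on `ℝ` of the integrable kernel
`exp (-u) u^(α-1) / Γ(α)` on `u > 0` with an integrable function (`rlInt_eq_convolution`). The
semigroup law is then associativity of convolution together with Euler's Beta integral
(`rlKer_convolution`).
-/

open MeasureTheory

/-- The left Riemann–Liouville fractional integral of order `α ≥ 0` from `a`:
`(I_{a+}^α x)(t) = (1/Γ(α)) ∫_a^t (t−s)^(α−1) x(s) ds` for `α > 0`, and the identity for
`α = 0`. -/
noncomputable def rlInt (a : ℝ) (α : ℝ) (x : ℝ → ℂ) : ℝ → ℂ :=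
  if α = 0 then x
  else fun t => (Real.Gamma α)⁻¹ • ∫ s in a..t, ((t - s) ^ (α - 1) : ℝ) • x s

open MeasureTheory ContinuousLinearMap Set Polynomial
open scoped Convolution

/-- The Riemann–Liouville kernel damped by `exp (-u)`, i.e. the density of the Gamma distribution
of shape `α` and rate `1`. The damping makes it integrable on the whole line. -/
noncomputable def rlKer (α : ℝ) : ℝ → ℝ :=
  (Ioi (0 : ℝ)).indicator fun u => (Real.Gamma α)⁻¹ * (Real.exp (-u) * u ^ (α - 1))

/-- The function `s ↦ exp (-s) f(s)` cut off to `(a, b)`. -/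
noncomputable def rlDamp (a b : ℝ) (f : ℝ → ℂ) : ℝ → ℂ :=
  (Ioo a b).indicator fun s => Real.exp (-s) • f s

lemma rlKer_of_nonpos (α : ℝ) {u : ℝ} (hu : u ≤ 0) : rlKer α u = 0 :=
  indicator_of_notMem (by simpa using hu) _

lemma rlKer_of_pos (α : ℝ) {u : ℝ} (hu : 0 < u) :
    rlKer α u = (Real.Gamma α)⁻¹ * (Real.exp (-u) * u ^ (α - 1)) :=
  indicator_of_mem (by simpa using hu) _

lemma integrable_rlKer {α : ℝ} (hα : 0 < α) : Integrable (rlKer α) := by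
  rw [rlKer, integrable_indicator_iff measurableSet_Ioi]
  exact (Real.GammaIntegral_convergent hα).const_mul _

lemma integrable_rlDamp {a b : ℝ} {f : ℝ → ℂ} (hf : IntegrableOn f (Ioo a b)) :
    Integrable (rlDamp a b f) := by
  rw [rlDamp, integrable_indicator_iff measurableSet_Ioo]
  refine Integrable.bdd_smul hf (φ := fun s => Real.exp (-s)) (Real.exp (-a))
    (by fun_prop) ?_
  filter_upwards [ae_restrict_mem measurableSet_Ioo] with s hs
  simpa using hs.1.le

/-- Real form of the scaled Beta integral. -/
lemma integral_rpow_mul_rpow {α β : ℝ} (hα : 0 < α) (hβ : 0 < β) {t : ℝ} (ht : 0 < t) :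
    ∫ s in Ioo 0 t, s ^ (α - 1) * (t - s) ^ (β - 1) =
      t ^ (α + β - 1) * (Real.Gamma α * Real.Gamma β / Real.Gamma (α + β)) := by
  have h := Complex.betaIntegral_scaled α β ht
  rw [Complex.betaIntegral_eq_Gamma_mul_div _ _ (by simpa) (by simpa),
    intervalIntegral.integral_of_le ht.le, integral_Ioc_eq_integral_Ioo] at h
  apply Complex.ofReal_injective
  rw [← integral_complex_ofReal]
  refine Eq.trans ?_ (h.trans ?_)
  · refine setIntegral_congr_fun measurableSet_Ioo fun s hs => ?_
    have h1 : 0 ≤ s := hs.1.le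
    have h2 : 0 ≤ t - s := sub_nonneg.2 hs.2.le
    simp only [Complex.ofReal_mul, Complex.ofReal_cpow h1, Complex.ofReal_cpow h2]
    push_cast
    rfl
  · rw [Complex.ofReal_mul, Complex.ofReal_cpow ht.le, Complex.ofReal_div, Complex.ofReal_mul,
      ← Complex.Gamma_ofReal, ← Complex.Gamma_ofReal, ← Complex.Gamma_ofReal]
    push_cast
    rfl

/-- The kernels form a convolution semigroup; this is Euler's Beta integral. -/
lemma rlKer_convolution {α β : ℝ} (hα : 0 < α) (hβ : 0 < β) :
    rlKer α ⋆[mul ℝ ℝ, volume] rlKer β = rlKer (α + β) := by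
  ext t
  rw [convolution_mul]
  have key : (fun s => rlKer α s * rlKer β (t - s)) = (Ioo 0 t).indicator fun s =>
      ((Real.Gamma α)⁻¹ * (Real.Gamma β)⁻¹ * Real.exp (-t)) *
        (s ^ (α - 1) * (t - s) ^ (β - 1)) := by
    ext s
    by_cases hs : s ∈ Ioo 0 t
    · rw [indicator_of_mem hs, rlKer_of_pos _ hs.1, rlKer_of_pos _ (sub_pos.2 hs.2),
        show -t = -s + -(t - s) by ring, Real.exp_add]
      ring
    · rw [indicator_of_notMem hs]
      rcases le_or_gt s 0 with h | h
      · rw [rlKer_of_nonpos _ h, zero_mul]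
      · have : t ≤ s := not_lt.1 fun h' => hs ⟨h, h'⟩
        rw [rlKer_of_nonpos β (sub_nonpos.2 this), mul_zero]
  rw [key, integral_indicator measurableSet_Ioo, integral_const_mul]
  rcases le_or_gt t 0 with h | h
  · rw [rlKer_of_nonpos _ h, Ioo_eq_empty (not_lt.2 h)]
    simp
  · rw [integral_rpow_mul_rpow hα hβ h, rlKer_of_pos _ h]
    have h1 := (Real.Gamma_pos_of_pos hα).ne'
    have h2 := (Real.Gamma_pos_of_pos hβ).ne'
    field_simp

/-- On `(a, b)`, the fractional integral is, up to the factor `exp t`, a convolution of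
integrable functions on the line. -/
lemma rlInt_eq_convolution {a b α : ℝ} (hα : 0 < α) (f : ℝ → ℂ) {t : ℝ} (ht : t ∈ Ioo a b) :
    rlInt a α f t =
      Real.exp t • (rlKer α ⋆[lsmul ℝ ℝ, volume] rlDamp a b f) t := by
  rw [convolution_lsmul_swap]
  have key : (fun s => rlKer α (t - s) • rlDamp a b f s) = (Ioo a t).indicator fun s =>
      (Real.exp (-t) * (Real.Gamma α)⁻¹) • ((t - s) ^ (α - 1) : ℝ) • f s := by
    ext s
    by_cases hs : s ∈ Ioo a t
    · rw [indicator_of_mem hs, rlKer_of_pos _ (sub_pos.2 hs.2), rlDamp,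
        indicator_of_mem (show s ∈ Ioo a b from ⟨hs.1, hs.2.trans ht.2⟩),
        show -t = -s + -(t - s) by ring, Real.exp_add, smul_smul, smul_smul]
      congr 1
      ring
    · rw [indicator_of_notMem hs]
      rcases le_or_gt s a with h | h
      · rw [rlDamp, indicator_of_notMem (fun h' => absurd h'.1 (not_lt.2 h)), smul_zero]
      · have : t ≤ s := not_lt.1 fun h' => hs ⟨h, h'⟩
        rw [rlKer_of_nonpos _ (sub_nonpos.2 this), zero_smul]
  rw [key, integral_indicator measurableSet_Ioo, integral_smul, smul_smul, ← mul_assoc,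
    ← Real.exp_add, add_neg_cancel, Real.exp_zero, one_mul, rlInt, if_neg hα.ne',
    intervalIntegral.integral_of_le ht.1.le, integral_Ioc_eq_integral_Ioo]

/-- Causality: the damped kernels are supported on the positive half-line, so damping and cutting
off a fractional integral alters the convolution only beyond `b`. -/
lemma convolution_rlDamp_rlInt {a b α β : ℝ} (hβ : 0 < β) (f : ℝ → ℂ) {t : ℝ}
    (ht : t ∈ Ioo a b) :
    (rlKer α ⋆[lsmul ℝ ℝ, volume] rlDamp a b (rlInt a β f)) t =
      (rlKer α ⋆[lsmul ℝ ℝ, volume] (rlKer β ⋆[lsmul ℝ ℝ, volume] rlDamp a b f)) t := by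
  rw [convolution_lsmul_swap, convolution_lsmul_swap]
  congr 1
  ext1 s
  rcases le_or_gt t s with h | h
  · rw [rlKer_of_nonpos _ (sub_nonpos.2 h), zero_smul, zero_smul]
  congr 1
  by_cases hs : s ∈ Ioo a b
  · rw [rlDamp, indicator_of_mem hs, rlInt_eq_convolution hβ f hs, smul_smul, ← Real.exp_add,
      neg_add_cancel, Real.exp_zero, one_smul]
  · have hsa : s ≤ a := not_lt.1 fun h' => hs ⟨h', h.trans ht.2⟩
    rw [rlDamp, indicator_of_notMem hs, convolution_lsmul_swap]
    refine (integral_eq_zero_of_ae (Filter.Eventually.of_forall fun r => ?_)).symm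
    change rlKer β (s - r) • rlDamp a b f r = 0
    rcases le_or_gt r a with h' | h'
    · rw [rlDamp, indicator_of_notMem (fun h'' => absurd h''.1 (not_lt.2 h')), smul_zero]
    · rw [rlKer_of_nonpos _ (by linarith), zero_smul]

lemma integrableOn_rlInt {a b α : ℝ} (hα : 0 ≤ α) {f : ℝ → ℂ} (hf : IntegrableOn f (Ioo a b)) :
    IntegrableOn (rlInt a α f) (Ioo a b) := by
  rcases hα.eq_or_lt with rfl | hα
  · simpa [rlInt] using hf
  have h := (integrable_rlKer hα).integrable_convolution (lsmul ℝ ℝ) (integrable_rlDamp hf)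
  have h2 : IntegrableOn (fun t => Real.exp t • (rlKer α ⋆[lsmul ℝ ℝ, volume] rlDamp a b f) t)
      (Ioo a b) := by
    refine Integrable.bdd_smul h.integrableOn (φ := fun s => Real.exp s) (Real.exp b)
      (by fun_prop) ?_
    filter_upwards [ae_restrict_mem measurableSet_Ioo] with s hs
    simpa using hs.2.le
  exact h2.congr_fun (fun t ht => (rlInt_eq_convolution hα f ht).symm) measurableSet_Ioo

/-- The semigroup law `I^α I^β = I^(α+β)`, almost everywhere on `(a, b)`. -/
lemma rlInt_rlInt {a b α β : ℝ} (hα : 0 ≤ α) (hβ : 0 ≤ β) {f : ℝ → ℂ}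
    (hf : IntegrableOn f (Ioo a b)) :
    ∀ᵐ t ∂(volume.restrict (Ioo a b)), rlInt a α (rlInt a β f) t = rlInt a (α + β) f t := by
  rcases hα.eq_or_lt with rfl | hα
  · simp [rlInt]
  rcases hβ.eq_or_lt with rfl | hβ
  · simp [rlInt]
  have hA := integrable_rlKer hα
  have hB := integrable_rlKer hβ
  have hF := integrable_rlDamp hf
  have hex : ∀ᵐ t, ConvolutionExistsAt (fun x => ‖rlKer α x‖)
      ((fun x => ‖rlKer β x‖) ⋆[mul ℝ ℝ, volume] fun x => ‖rlDamp a b f x‖) t (mul ℝ ℝ) volume :=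
    hA.norm.ae_convolution_exists _ (hB.norm.integrable_convolution _ hF.norm)
  filter_upwards [ae_restrict_of_ae hex, ae_restrict_mem measurableSet_Ioo] with t h1 ht
  rw [rlInt_eq_convolution hα _ ht, rlInt_eq_convolution (add_pos hα hβ) _ ht,
    convolution_rlDamp_rlInt hβ f ht, ← rlKer_convolution hα hβ]
  congr 1
  refine (convolution_assoc (mul ℝ ℝ) (lsmul ℝ ℝ) (lsmul ℝ ℝ) (lsmul ℝ ℝ) ?_
    hA.1 hB.1 hF.1 (hA.ae_convolution_exists _ hB)
    (hB.norm.ae_convolution_exists _ hF.norm) h1).symm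
  intro x y z
  simp [mul_assoc]

/-- Linearity; it holds only almost everywhere because the integrals defining the fractional
integrals of the summands converge only almost everywhere. -/
lemma rlInt_sum {a b α : ℝ} (hα : 0 ≤ α) {ι : Type*} [Fintype ι] (c : ι → ℂ) (f : ι → ℝ → ℂ)
    (hf : ∀ i, IntegrableOn (f i) (Ioo a b)) :
    ∀ᵐ t ∂(volume.restrict (Ioo a b)),
      rlInt a α (fun s => ∑ i, c i * f i s) t = ∑ i, c i * rlInt a α (f i) t := by
  rcases hα.eq_or_lt with rfl | hα
  · simp [rlInt]
  have hex : ∀ᵐ t, ∀ i, ConvolutionExistsAt (rlKer α) (rlDamp a b (f i)) t (lsmul ℝ ℝ) volume :=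
    ae_all_iff.2 fun i => (integrable_rlKer hα).ae_convolution_exists _ (integrable_rlDamp (hf i))
  filter_upwards [ae_restrict_of_ae hex, ae_restrict_mem measurableSet_Ioo] with t h1 ht
  simp_rw [rlInt_eq_convolution hα _ ht, mul_smul_comm, ← Finset.smul_sum, convolution_lsmul,
    ← integral_const_mul]
  have hint : ∀ i, Integrable fun s => c i * rlKer α s • rlDamp a b (f i) (t - s) :=
    fun i => (h1 i).integrable.const_mul (c i)
  rw [← integral_finsetSum _ fun i _ => hint i]
  congr 2
  ext1 s
  simp only [rlDamp, indicator_apply]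
  split_ifs
  · simp only [Finset.smul_sum, mul_smul_comm]
  · simp

/-- Over `ℂ` every nonzero polynomial has a multiple that is a nonzero polynomial in `X ^ q`:
each root factor `X - r` divides `X ^ q - r ^ q`. -/
lemma exists_mul_eq_expand (q : ℕ) {P : ℂ[X]} (hP : P ≠ 0) :
    ∃ Q R : ℂ[X], R ≠ 0 ∧ Q * P = expand ℂ q R := by
  induction h : P.natDegree generalizing P with
  | zero =>
    refine ⟨1, P, hP, ?_⟩
    rw [eq_C_of_natDegree_eq_zero h]
    simp
  | succ n ih =>
    obtain ⟨r, hr⟩ := IsAlgClosed.exists_root P (by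
      rw [degree_eq_natDegree hP, h]
      exact_mod_cast n.succ_ne_zero)
    obtain ⟨S, rfl⟩ := dvd_iff_isRoot.2 hr
    have hS : S ≠ 0 := right_ne_zero_of_mul hP
    rw [natDegree_mul (X_sub_C_ne_zero r) hS, natDegree_X_sub_C] at h
    obtain ⟨Q, R, hR, hQ⟩ := ih hS (by omega)
    obtain ⟨T, hT⟩ := sub_dvd_pow_sub_pow (X : ℂ[X]) (C r) q
    refine ⟨T * Q, (X - C (r ^ q)) * R, mul_ne_zero (X_sub_C_ne_zero _) hR, ?_⟩
    rw [map_mul, ← hQ, map_sub, expand_X, expand_C, map_pow, hT]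
    ring

/-- Every linear fractional integral operator with constant coefficients
`Σ_i c_i · I_{a+}^{a_i/q}` (with pairwise distinct exponents `a_i ∈ ℕ`, `q > 0`, and nonzero
coefficient attached to the largest exponent) can be composed with another such operator
`Σ_k d_k · I_{a+}^{b_k/q}` so that the composition acts, a.e. on `(a,b)` and on every
function integrable on `(a,b)`, as a linear integral operator with constant coefficients and
natural-number orders `Σ_{j=0}^{n} e_j · I_{a+}^{j}`, whose top-order coefficient `e_n` is
nonzero. -/
theorem fractional_operator_composition_natural_orders
    (a b : ℝ) (hab : a < b) (q : ℕ) (hq : 0 < q)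
    (l : ℕ) (hl : 1 ≤ l) (aexp : Fin l → ℕ) (hinj : Function.Injective aexp)
    (c : Fin l → ℂ)
    (hc : ∀ i₀ : Fin l, (∀ i, aexp i ≤ aexp i₀) → c i₀ ≠ 0) :
    ∃ (m : ℕ) (d : Fin m → ℂ) (bexp : Fin m → ℕ) (n : ℕ) (e : Fin (n + 1) → ℂ),
      e (Fin.last n) ≠ 0 ∧
      ∀ x : ℝ → ℂ, IntegrableOn x (Set.Ioo a b) →
        ∀ᵐ t ∂(volume.restrict (Set.Ioo a b)),
          ∑ k, d k *
              rlInt a ((bexp k : ℝ) / (q : ℝ))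
                (fun s => ∑ i, c i * rlInt a ((aexp i : ℝ) / (q : ℝ)) x s) t
            = ∑ j : Fin (n + 1), e j * rlInt a ((j : ℕ) : ℝ) x t := by
  -- The symbol of the given operator, with `X` standing for `I^(1/q)`.
  let P : ℂ[X] := ∑ i, monomial (aexp i) (c i)
  have hP : P ≠ 0 := by
    have : Nonempty (Fin l) := ⟨⟨0, hl⟩⟩
    obtain ⟨i₀, h₀⟩ := Finite.exists_max aexp
    intro h
    apply hc i₀ h₀
    have h2 : P.coeff (aexp i₀) = c i₀ := by
      simp [P, coeff_monomial, hinj.eq_iff]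
    rw [← h2, h, coeff_zero]
  obtain ⟨Q, R, hR, hQ⟩ := exists_mul_eq_expand q hP
  refine ⟨Q.natDegree + 1, fun k => Q.coeff k, fun k => k, R.natDegree, fun j => R.coeff j,
    by simpa using hR, fun x hx => ?_⟩
  have hq' : (q : ℝ) ≠ 0 := by exact_mod_cast hq.ne'
  have h1 : ∀ᵐ t ∂(volume.restrict (Ioo a b)), ∀ k : Fin (Q.natDegree + 1),
      rlInt a (((k : ℕ) : ℝ) / q) (fun s => ∑ i, c i * rlInt a ((aexp i : ℝ) / q) x s) t =
        ∑ i, c i * rlInt a (((k : ℕ) : ℝ) / q) (rlInt a ((aexp i : ℝ) / q) x) t :=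
    ae_all_iff.2 fun k => rlInt_sum (by positivity) c _
      fun i => integrableOn_rlInt (by positivity) hx
  have h2 : ∀ᵐ t ∂(volume.restrict (Ioo a b)), ∀ (k : Fin (Q.natDegree + 1)) (i : Fin l),
      rlInt a (((k : ℕ) : ℝ) / q) (rlInt a ((aexp i : ℝ) / q) x) t =
        rlInt a (((k : ℕ) : ℝ) / q + (aexp i : ℝ) / q) x t :=
    ae_all_iff.2 fun k => ae_all_iff.2 fun i => rlInt_rlInt (by positivity) (by positivity) hx
  filter_upwards [h1, h2] with t h1 h2
  -- The value at `t` of the operator with symbol `p`, as a linear functional of `p`.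
  let Φ : ℂ[X] →ₗ[ℂ] ℂ :=
    lsum fun n => LinearMap.mulRight ℂ (rlInt a ((n : ℝ) / q) x t)
  have hΦ : ∀ n z, Φ (monomial n z) = z * rlInt a ((n : ℝ) / q) x t := by
    intro n z
    simp [Φ, lsum_apply, sum_monomial_index]
  have hL : Φ (Q * P) = ∑ k : Fin (Q.natDegree + 1), ∑ i, Q.coeff k * (c i *
      rlInt a (((k : ℕ) : ℝ) / q + (aexp i : ℝ) / q) x t) := by
    conv_lhs => rw [Q.as_sum_range, Finset.sum_range]
    simp only [P, Finset.sum_mul_sum, map_sum, monomial_mul_monomial, hΦ, Nat.cast_add, add_div,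
      mul_assoc]
  have hRR : Φ (expand ℂ q R) =
      ∑ j : Fin (R.natDegree + 1), R.coeff j * rlInt a ((j : ℕ) : ℝ) x t := by
    conv_lhs => rw [R.as_sum_range, Finset.sum_range]
    simp only [map_sum, expand_monomial, hΦ, Nat.cast_mul]
    simp only [mul_div_cancel_right₀ _ hq']
  rw [← hRR, ← hQ, hL]
  refine Finset.sum_congr rfl fun k _ => ?_
  rw [h1 k, Finset.mul_sum]
  exact Finset.sum_congr rfl fun i _ => by rw [h2 k i]
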